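/- For every integer k ≥ 2 and all real numbers λ₁, …, λ_k, w with 1 ≤ w ≤ min_j λ_j, there exist uncountably many vectors (ζ₁,…,ζ_k) ∈ ℝ^k, ℚ-linearly independent together with 1, such that λ₁(ζ_j) = λ_j for each j and χ_k(ζ₁,…,ζ_k) = w. -/

import Mathlib

open Filter

/-- distance from a real number to the nearest integer -/
noncomputable def distNearestInt (t : ℝ) : ℝ := |t - round t|

/-- exponents `ν` admissible for the classical simultaneous approximation exponent `ω_k` -/
def omegaSet (k : ℕ) (ζ : Fin k → ℝ) : Set ℝ :=
  {ν | ∀ N : ℕ, ∃ x : ℕ, N ≤ x ∧ 0 < x ∧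
      ∀ j, distNearestInt ((x : ℝ) * ζ j) ≤ (x : ℝ) ^ (-ν)}

/-- the classical exponent `ω_k` of simultaneous rational approximation -/
noncomputable def omegaExp (k : ℕ) (ζ : Fin k → ℝ) : EReal :=
  sSup ((fun ν : ℝ => (ν : EReal)) '' omegaSet k ζ)

/-- exponents `ν` admissible for the multi-denominator exponent `χ_k` -/
def chiSet (k : ℕ) (ζ : Fin k → ℝ) : Set ℝ :=
  {ν | ∀ X₀ : ℝ, ∃ X : ℝ, X₀ ≤ X ∧ ∃ x : Fin k → ℤ,
      (∀ j, x j ≠ 0) ∧ (∀ j, (|x j| : ℝ) ≤ X) ∧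
      ∀ j, distNearestInt ((x j : ℝ) * ζ j) ≤ X ^ (-ν)}

/-- the multi-denominator exponent `χ_k` of simultaneous approximation -/
noncomputable def chiExp (k : ℕ) (ζ : Fin k → ℝ) : EReal :=
  sSup ((fun ν : ℝ => (ν : EReal)) '' chiSet k ζ)

/-- exponents `μ` admissible for the one-dimensional exponent `λ₁` -/
def lambda1Set (ζ : ℝ) : Set ℝ :=
  {μ | ∀ N : ℕ, ∃ q : ℕ, N ≤ q ∧ 0 < q ∧
      distNearestInt ((q : ℝ) * ζ) ≤ (q : ℝ) ^ (-μ)}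

/-- the classical one-dimensional irrationality exponent `λ₁` -/
noncomputable def lambda1Exp (ζ : ℝ) : EReal :=
  sSup ((fun μ : ℝ => (μ : EReal)) '' lambda1Set ζ)

/-!
All coordinates are built on the common scales `T i = 2 ^ K ^ i` with `K` large. The continued
fraction of `ζ j` has bounded partial quotients except that, for every `i`, one large partial
quotient makes the denominators jump from about `T i ^ α j` to about `T i ^ (α j * λ j)`. Each such
jump produces an approximation of exponent `λ j`, and away from the jumps the errors are no smaller
than a constant times `1 / q`, so `λ₁ (ζ j) = λ j`.

With `α 0 = 1` and `α j = w / λ j` for `j ≠ 0`, the denominators `T i ^ α j ≤ T i` have errors at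
most `T i ^ (-w)`, so `χ_k ≥ w`. Conversely, let `X` bound denominators for `ζ 0` and `ζ 1` with
errors smaller than a constant times `X ^ (-w)`. Both come from jumps, of index `i` for `ζ 0` and
`l` for `ζ 1`, and up to constants `T i ≤ X`. If `l ≤ i`, the error of `ζ 1` is at least
`T l ^ (-w) ≥ X ^ (-w)`; if `i < l`, then `X` lies beyond the end of the jump `i` of `ζ 0`, whose
error is thus at least `1 / X ≥ X ^ (-w)`. Hence `χ_k ≤ w`.

The remaining freedom in the partial quotients gives uncountably many choices of each coordinate, of
which only countably many lie in the `ℚ`-span of `1` and the preceding ones.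
-/

section ContinuedFraction

/-- The denominators of the convergents of the continued fraction `[0; 1, a₀, a₁, …]`, starting from
the convergent `0 / 1`. Fixing the first partial quotient to be `1` makes all denominators positive
while the recursion stays uniform. -/
def cfDen (a : ℕ → ℕ+) : ℕ → ℕ
  | 0 => 1
  | 1 => 1
  | n + 2 => a n * cfDen a (n + 1) + cfDen a n

/-- The numerators of the convergents of the continued fraction `[0; 1, a₀, a₁, …]`, indexed as in
`cfDen`. -/
def cfNum (a : ℕ → ℕ+) : ℕ → ℕ
  | 0 => 0
  | 1 => 1
  | n + 2 => a n * cfNum a (n + 1) + cfNum a n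

/-- The value of the continued fraction `[0; 1, a₀, a₁, …]`, as the supremum of the convergents of
even index. -/
noncomputable def cfValue (a : ℕ → ℕ+) : ℝ :=
  ⨆ m : ℕ, (cfNum a (2 * m) : ℝ) / cfDen a (2 * m)

/-- The error `|qₙ ζ - pₙ|` of the `n`-th convergent of `ζ = [0; 1, a₀, a₁, …]`, with the absolute
value replaced by the sign `(-1) ^ n`, so that it satisfies a linear recursion. -/
noncomputable def cfError (a : ℕ → ℕ+) (n : ℕ) : ℝ :=
  (-1) ^ n * (cfDen a n * cfValue a - cfNum a n)

variable (a : ℕ → ℕ+) (n : ℕ)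

lemma cfDen_pos : 0 < cfDen a n := by
  induction n using Nat.twoStepInduction with
  | zero => exact one_pos
  | one => exact one_pos
  | more n ih _ => exact Nat.add_pos_right _ ih

lemma cfDen_le_succ : cfDen a n ≤ cfDen a (n + 1) := by
  cases n with
  | zero => exact le_rfl
  | succ n => exact (Nat.le_mul_of_pos_left _ (a n).pos).trans (Nat.le_add_right _ _)

lemma le_cfDen : n ≤ cfDen a n := by
  induction n using Nat.twoStepInduction with
  | zero => exact zero_le_one
  | one => exact le_rfl
  | more n _ ih =>
    exact (Nat.add_le_add ih (cfDen_pos a n)).trans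
      (Nat.add_le_add_right (Nat.le_mul_of_pos_left _ (a n).pos) _)

lemma exists_cfDen_lt_le_cfDen_succ {Y : ℝ} (hY : 1 < Y) :
    ∃ n, (cfDen a n : ℝ) < Y ∧ Y ≤ cfDen a (n + 1) := by
  obtain ⟨N, hN⟩ := exists_nat_ge Y
  obtain ⟨n, hn, hn'⟩ := Nat.exists_not_and_succ_of_not_zero_of_exists
    (p := fun n => Y ≤ cfDen a n) (by simpa [cfDen] using hY)
    ⟨N, hN.trans (Nat.cast_le.mpr (le_cfDen a N))⟩
  exact ⟨n, not_le.mp hn, hn'⟩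

lemma cfNum_succ_mul_cfDen_sub :
    (cfNum a (n + 1) * cfDen a n - cfNum a n * cfDen a (n + 1) : ℤ) = (-1) ^ n := by
  induction n with
  | zero => simp [cfNum, cfDen]
  | succ n ih =>
    simp only [cfNum, cfDen, pow_succ, ← ih]
    push_cast
    ring

lemma cfNum_add_two_mul_cfDen_sub :
    (cfNum a (n + 2) * cfDen a n - cfNum a n * cfDen a (n + 2) : ℤ) = (-1) ^ n * a n := by
  simp only [cfNum, cfDen, ← cfNum_succ_mul_cfDen_sub a n]
  push_cast
  ring

lemma isCoprime_cfDen_cfNum : IsCoprime (cfDen a n : ℤ) (cfNum a n) := by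
  have hdet := cfNum_succ_mul_cfDen_sub a n
  have hsq : ((-1) ^ n * (-1) ^ n : ℤ) = 1 := by rw [← mul_pow]; simp
  exact ⟨(-1) ^ n * cfNum a (n + 1), -((-1) ^ n * cfDen a (n + 1)),
    by linear_combination (-1) ^ n * hdet + hsq⟩

lemma strictMono_even_convergents :
    StrictMono fun m : ℕ => (cfNum a (2 * m) : ℝ) / cfDen a (2 * m) := by
  refine strictMono_nat_of_lt_succ fun m => ?_
  have hdet : (cfNum a (2 * m + 2) * cfDen a (2 * m) -
      cfNum a (2 * m) * cfDen a (2 * m + 2) : ℝ) = a (2 * m) := by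
    simpa using congrArg (Int.cast (R := ℝ)) (cfNum_add_two_mul_cfDen_sub a (2 * m))
  have ha : (0 : ℝ) < a (2 * m) := by exact_mod_cast (a (2 * m)).pos
  rw [div_lt_div_iff₀ (by exact_mod_cast cfDen_pos a _) (by exact_mod_cast cfDen_pos a _)]
  exact sub_pos.mp (hdet.symm ▸ ha)

lemma strictAnti_odd_convergents :
    StrictAnti fun m : ℕ => (cfNum a (2 * m + 1) : ℝ) / cfDen a (2 * m + 1) := by
  refine strictAnti_nat_of_succ_lt fun m => ?_
  have hdet : (cfNum a (2 * m + 1 + 2) * cfDen a (2 * m + 1) -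
      cfNum a (2 * m + 1) * cfDen a (2 * m + 1 + 2) : ℝ) = -a (2 * m + 1) := by
    simpa [pow_succ] using congrArg (Int.cast (R := ℝ)) (cfNum_add_two_mul_cfDen_sub a (2 * m + 1))
  have ha : (0 : ℝ) < a (2 * m + 1) := by exact_mod_cast (a (2 * m + 1)).pos
  rw [div_lt_div_iff₀ (by exact_mod_cast cfDen_pos a _) (by exact_mod_cast cfDen_pos a _)]
  exact sub_neg.mp (hdet.symm ▸ neg_neg_of_pos ha)

lemma even_convergent_le_odd_convergent (m : ℕ) :
    (cfNum a (2 * m) : ℝ) / cfDen a (2 * m) ≤ cfNum a (2 * m + 1) / cfDen a (2 * m + 1) := by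
  have hdet : (cfNum a (2 * m + 1) * cfDen a (2 * m) -
      cfNum a (2 * m) * cfDen a (2 * m + 1) : ℝ) = 1 := by
    simpa using congrArg (Int.cast (R := ℝ)) (cfNum_succ_mul_cfDen_sub a (2 * m))
  rw [div_le_div_iff₀ (by exact_mod_cast cfDen_pos a _) (by exact_mod_cast cfDen_pos a _)]
  exact sub_nonneg.mp (hdet.symm ▸ zero_le_one)

lemma cfError_pos : 0 < cfError a n := by
  have hmem := (strictMono_even_convergents a).monotone.ciSup_mem_iInter_Icc_of_antitone
    (strictAnti_odd_convergents a).antitone (even_convergent_le_odd_convergent a)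
  have hIcc : ∀ m, cfValue a ∈ Set.Icc _ _ := Set.mem_iInter.mp hmem
  obtain ⟨m, rfl | rfl⟩ := Nat.even_or_odd' n
  · have h := (strictMono_even_convergents a m.lt_succ_self).trans_le (hIcc (m + 1)).1
    rw [div_lt_iff₀' (by exact_mod_cast cfDen_pos a _)] at h
    simpa [cfError] using h
  · have h := (hIcc (m + 1)).2.trans_lt (strictAnti_odd_convergents a m.lt_succ_self)
    rw [lt_div_iff₀' (by exact_mod_cast cfDen_pos a _)] at h
    simpa [cfError, pow_succ] using h

lemma cfError_add_two : cfError a (n + 2) = cfError a n - a n * cfError a (n + 1) := by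
  simp only [cfError, cfDen, cfNum, pow_succ]
  push_cast
  ring

lemma cfError_add_two_lt_succ : cfError a (n + 2) < cfError a (n + 1) := by
  have ha : (1 : ℝ) ≤ a (n + 1) := by exact_mod_cast PNat.pos (a (n + 1))
  have hrec := cfError_add_two a (n + 1)
  nlinarith [cfError_pos a (n + 2), cfError_pos a (n + 3)]

lemma cfError_mul_cfDen_add :
    cfError a n * cfDen a (n + 1) + cfError a (n + 1) * cfDen a n = 1 := by
  have hdet : (cfNum a (n + 1) * cfDen a n - cfNum a n * cfDen a (n + 1) : ℝ) = (-1) ^ n := by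
    exact_mod_cast cfNum_succ_mul_cfDen_sub a n
  have hsq : ((-1) ^ n * (-1) ^ n : ℝ) = 1 := by rw [← mul_pow]; simp
  simp only [cfError, pow_succ]
  linear_combination (-1) ^ n * hdet + hsq

lemma coe_partialQuotient_eq_floor : (a n : ℤ) = ⌊cfError a n / cfError a (n + 1)⌋ := by
  have hpos := cfError_pos a (n + 1)
  have hrec := cfError_add_two a n
  refine (Int.floor_eq_iff.mpr ⟨?_, ?_⟩).symm
  · rw [le_div_iff₀ hpos]
    push_cast
    linarith [cfError_pos a (n + 2)]
  · rw [div_lt_iff₀ hpos]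
    push_cast
    linarith [cfError_add_two_lt_succ a n]

lemma cfValue_injective : Function.Injective cfValue := by
  intro a b hab
  have hfloor : ∀ n, cfError a n = cfError b n → cfError a (n + 1) = cfError b (n + 1) →
      a n = b n := fun n h₀ h₁ => by
    have h := coe_partialQuotient_eq_floor a n
    rw [h₀, h₁, ← coe_partialQuotient_eq_floor b n] at h
    exact_mod_cast h
  have herror : ∀ n, cfError a n = cfError b n ∧ cfError a (n + 1) = cfError b (n + 1) := by
    intro n
    induction n with
    | zero => simp [cfError, cfDen, cfNum, hab]
    | succ n ih =>
      exact ⟨ih.2, by rw [cfError_add_two, cfError_add_two, ih.1, ih.2, hfloor n ih.1 ih.2]⟩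
  exact funext fun n => hfloor n (herror n).1 (herror n).2

lemma abs_cfDen_mul_cfValue_sub : |cfDen a n * cfValue a - cfNum a n| = cfError a n := by
  rw [← abs_of_pos (cfError_pos a n), cfError, abs_mul, abs_neg_one_pow, one_mul]

lemma cfError_mul_cfDen_succ_le_one : cfError a n * cfDen a (n + 1) ≤ 1 := by
  have h := mul_nonneg (cfError_pos a (n + 1)).le (Nat.cast_nonneg (α := ℝ) (cfDen a n))
  linarith [cfError_mul_cfDen_add a n]

lemma distNearestInt_cfDen_mul_le : distNearestInt (cfDen a n * cfValue a) ≤ cfError a n :=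
  (round_le _ (cfNum a n : ℤ)).trans_eq (mod_cast abs_cfDen_mul_cfValue_sub a n)

/-- With `y` the integer nearest to `x ζ`, the integer `x pₙ - y qₙ` is nonzero, as `qₙ` is too
large to divide `x`, and it differs from `qₙ (x ζ - y)` by at most `|x| |qₙ ζ - pₙ| ≤ 1 / 2`. -/
lemma one_le_two_mul_cfDen_mul_distNearestInt {x : ℤ} (hx : x ≠ 0) (hxq : 2 * |x| ≤ cfDen a n) :
    1 ≤ 2 * cfDen a n * distNearestInt (x * cfValue a) := by
  set y := round (x * cfValue a)
  have hne : x * cfNum a n - y * cfDen a n ≠ 0 := fun h0 => by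
    have hdvd : (cfDen a n : ℤ) ∣ x :=
      (isCoprime_cfDen_cfNum a n).dvd_of_dvd_mul_right ⟨y, by linarith⟩
    exact hx (Int.eq_zero_of_abs_lt_dvd hdvd (by linarith [abs_pos.mpr hx]))
  have hone : (1 : ℝ) ≤ |(x * cfNum a n - y * cfDen a n : ℝ)| := by
    exact_mod_cast Int.one_le_abs hne
  have htriangle : |(x * cfNum a n - y * cfDen a n : ℝ)| ≤
      cfDen a n * distNearestInt (x * cfValue a) + |(x : ℝ)| * cfError a n := by
    calc |(x * cfNum a n - y * cfDen a n : ℝ)|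
        = |cfDen a n * (x * cfValue a - y) - x * (cfDen a n * cfValue a - cfNum a n)| := by
          congr 1; ring
      _ ≤ |cfDen a n * (x * cfValue a - y)| + |x * (cfDen a n * cfValue a - cfNum a n)| :=
          abs_sub _ _
      _ = cfDen a n * distNearestInt (x * cfValue a) + |(x : ℝ)| * cfError a n := by
          rw [abs_mul, abs_mul, abs_cfDen_mul_cfValue_sub, Nat.abs_cast, distNearestInt]
  have herror : 2 * |(x : ℝ)| * cfError a n ≤ 1 := by
    have hxq' : 2 * |(x : ℝ)| ≤ cfDen a (n + 1) := by
      exact_mod_cast hxq.trans (Nat.cast_le.mpr (cfDen_le_succ a n))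
    calc 2 * |(x : ℝ)| * cfError a n ≤ cfDen a (n + 1) * cfError a n :=
          mul_le_mul_of_nonneg_right hxq' (cfError_pos a n).le
      _ ≤ 1 := mul_comm (cfError a n) _ ▸ cfError_mul_cfDen_succ_le_one a n
  linarith

end ContinuedFraction

section PrescribedGrowth

lemma exists_partialQuotients_eq (G : ℕ → ℕ → ℕ → ℕ+) :
    ∃ a : ℕ → ℕ+, ∀ n, a n = G n (cfDen a n) (cfDen a (n + 1)) := by
  let dens (n : ℕ) : ℕ × ℕ :=
    n.rec (1, 1) fun m d => (d.2, G m d.1 d.2 * d.2 + d.1)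
  let a (n : ℕ) : ℕ+ := G n (dens n).1 (dens n).2
  have hdens : ∀ n, cfDen a n = (dens n).1 ∧ cfDen a (n + 1) = (dens n).2 := by
    intro n
    induction n with
    | zero => exact ⟨rfl, rfl⟩
    | succ n ih => exact ⟨ih.2, by rw [cfDen, ih.1, ih.2]⟩
  exact ⟨a, fun n => by rw [(hdens n).1, (hdens n).2]⟩

lemma le_floor_mul_add_and_le_four_mul {y q r ε : ℝ} (hq : 0 < q) (hqy : q ≤ y) (hr : 0 ≤ r)
    (hrq : r ≤ q) (hε : 0 ≤ ε) (hε_one : ε ≤ 1) :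
    y ≤ (⌊y / q⌋₊ + ε + 1) * q + r ∧ (⌊y / q⌋₊ + ε + 1) * q + r ≤ 4 * y := by
  have hfloor_le : ⌊y / q⌋₊ * q ≤ y :=
    (le_div_iff₀ hq).mp (Nat.floor_le (div_nonneg (hq.le.trans hqy) hq.le))
  have hlt_floor : y < (⌊y / q⌋₊ + 1) * q := (div_lt_iff₀ hq).mp (Nat.lt_floor_add_one _)
  have hεq : 0 ≤ ε * q := mul_nonneg hε hq.le
  have hεq_le : ε * q ≤ q := mul_le_of_le_one_left hq.le hε_one
  constructor <;> linarith

/-- The partial quotient `aₙ` is chosen as one of two consecutive integers near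
`J (qₙ₊₁) / qₙ₊₁`; the free choice encodes a subset of `ℕ`. -/
lemma not_countable_setOf_cfDen_growth {J : ℕ → ℝ} (hJ : ∀ y : ℕ, y ≤ J y) (hJ_one : J 1 ≤ 1) :
    ¬ {a : ℕ → ℕ+ | ∀ n, J (cfDen a n) ≤ cfDen a (n + 1) ∧
        cfDen a (n + 1) ≤ 4 * J (cfDen a n)}.Countable := by
  choose a ha using fun s : Set ℕ => exists_partialQuotients_eq
    fun n _ q => Nat.succPNat (⌊J q / q⌋₊ + s.indicator 1 n)
  have hinj : Function.Injective a := fun s t hst => by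
    refine Set.indicator_one_inj ℕ (funext fun n => ?_)
    have h := ha s n
    rw [hst, ha t n, Nat.succPNat_inj] at h
    exact (add_left_cancel h).symm
  have hgrowth : ∀ s n, J (cfDen (a s) n) ≤ cfDen (a s) (n + 1) ∧
      cfDen (a s) (n + 1) ≤ 4 * J (cfDen (a s) n) := by
    intro s n
    cases n with
    | zero =>
      have h := hJ 1
      simp only [cfDen, Nat.cast_one] at h ⊢
      exact ⟨hJ_one, by linarith⟩
    | succ n =>
      set q := cfDen (a s) (n + 1)
      have hbit : (s.indicator 1 n : ℕ) ≤ (1 : ℝ) := by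
        exact_mod_cast Set.indicator_le_self' (fun _ _ => zero_le_one) n
      have hrec : (cfDen (a s) (n + 2) : ℝ) =
          (⌊J q / q⌋₊ + (s.indicator 1 n : ℕ) + 1) * q + cfDen (a s) n := by
        rw [cfDen, ha s n, Nat.succPNat_coe]
        push_cast
        rfl
      rw [hrec]
      exact le_floor_mul_add_and_le_four_mul (by exact_mod_cast cfDen_pos _ _) (hJ q)
        (Nat.cast_nonneg _) (by exact_mod_cast cfDen_le_succ _ _) (Nat.cast_nonneg _) hbit
  intro hcount
  have : Countable (Set ℕ) := Set.countable_univ_iff.mp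
    ((hcount.preimage hinj).mono fun s _ => hgrowth s)
  obtain ⟨f, hf⟩ := exists_injective_nat (Set ℕ)
  exact Function.cantor_injective f hf

end PrescribedGrowth

section Gaps

/-- For interlaced thresholds `A 0 ≤ B 0 ≤ A 1 ≤ B 1 ≤ …`, this is `B i` if `y` lies in the gap
`[A i, B i)`, and `y` if `y ≥ 0` lies in no gap (the supremum is `0` below `A 0`). -/
noncomputable def gapExit (A B : ℕ → ℝ) (y : ℝ) : ℝ :=
  max y (sSup (B '' {i | A i ≤ y}))

/-- Up to constants, the denominators of the good approximations of `ζ` avoid the gaps `(A i, B i)`: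
each gap is entered from a denominator of size `A i` with error `1 / B i`, and except for these, `ζ`
behaves as a badly approximable number. -/
structure HasApproximationGaps (A B : ℕ → ℝ) (ζ : ℝ) : Prop where
  exists_mul_distNearestInt_le_one : ∀ i, ∃ x : ℕ, A i ≤ x ∧ x ≤ 4 * A i ∧
    B i * distNearestInt (x * ζ) ≤ 1
  one_le_mul_distNearestInt : ∀ x : ℤ, x ≠ 0 → 1 ≤ 16 * |(x : ℝ)| * distNearestInt (x * ζ) ∨
    ∃ i, A i ≤ 2 * |(x : ℝ)| ∧ 1 ≤ 8 * B i * distNearestInt (x * ζ)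

lemma le_gapExit (A B : ℕ → ℝ) (y : ℝ) : y ≤ gapExit A B y :=
  le_max_left _ _

variable {A B : ℕ → ℝ} (hAB : ∀ i, A i ≤ B i) (hBA : ∀ i, B i ≤ A (i + 1))

include hAB hBA

lemma gapEnd_le_gapStart_of_lt {i j : ℕ} (hij : i < j) : B i ≤ A j :=
  (hBA i).trans (monotone_nat_of_le_succ (fun n => (hAB n).trans (hBA n)) hij)

lemma gapExit_eq_of_mem_gap {i : ℕ} {y : ℝ} (hAy : A i ≤ y) (hyB : y < B i) :
    gapExit A B y = B i := by
  have hgreatest : IsGreatest (B '' {l | A l ≤ y}) (B i) := by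
    refine ⟨⟨i, hAy, rfl⟩, Set.forall_mem_image.mpr fun l hl => ?_⟩
    have hli : l ≤ i := not_lt.mp fun hil =>
      (hyB.trans_le (gapEnd_le_gapStart_of_lt hAB hBA hil)).not_ge hl
    exact monotone_nat_of_le_succ (fun n => (hBA n).trans (hAB (n + 1))) hli
  rw [gapExit, hgreatest.csSup_eq, max_eq_right hyB.le]

lemma le_gapExit_of_le {i : ℕ} {y : ℝ} (hAy : A i ≤ y) : B i ≤ gapExit A B y := by
  rcases lt_or_ge y (B i) with hyB | hBy
  · exact (gapExit_eq_of_mem_gap hAB hBA hAy hyB).ge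
  · exact hBy.trans (le_gapExit A B y)

lemma gapExit_eq_self_or {y : ℝ} (hy : 0 ≤ y) :
    gapExit A B y = y ∨ ∃ i, A i ≤ y ∧ gapExit A B y = B i := by
  by_cases hgap : ∃ i, A i ≤ y ∧ y < B i
  · obtain ⟨i, hAy, hyB⟩ := hgap
    exact .inr ⟨i, hAy, gapExit_eq_of_mem_gap hAB hBA hAy hyB⟩
  · push Not at hgap
    exact .inl (max_eq_left (Real.sSup_le (Set.forall_mem_image.mpr hgap) hy))

lemma gapExit_le_of_lt {i : ℕ} {y : ℝ} (hy : 0 ≤ y) (hyA : y < A i) : gapExit A B y ≤ A i := by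
  rcases gapExit_eq_self_or hAB hBA hy with hself | ⟨l, hAy, hexit⟩
  · exact hself.trans_le hyA.le
  · have hA : Monotone A := monotone_nat_of_le_succ fun n => (hAB n).trans (hBA n)
    exact hexit.trans_le (gapEnd_le_gapStart_of_lt hAB hBA (hA.reflect_lt (hAy.trans_lt hyA)))

lemma hasApproximationGaps_cfValue (hA : ∀ i, 1 < A i) {a : ℕ → ℕ+}
    (ha : ∀ n, gapExit A B (cfDen a n) ≤ cfDen a (n + 1) ∧
      cfDen a (n + 1) ≤ 4 * gapExit A B (cfDen a n)) :
    HasApproximationGaps A B (cfValue a) where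
  exists_mul_distNearestInt_le_one i := by
    obtain ⟨n, hlt, hle⟩ := exists_cfDen_lt_le_cfDen_succ a (hA i)
    have hexit : gapExit A B (cfDen a n) ≤ A i := gapExit_le_of_lt hAB hBA (Nat.cast_nonneg _) hlt
    have hB : B i ≤ cfDen a (n + 2) := (le_gapExit_of_le hAB hBA hle).trans (ha (n + 1)).1
    refine ⟨cfDen a (n + 1), hle, by linarith [(ha n).2], ?_⟩
    calc B i * distNearestInt (cfDen a (n + 1) * cfValue a)
        ≤ cfDen a (n + 2) * cfError a (n + 1) :=
          mul_le_mul hB (distNearestInt_cfDen_mul_le a _) (abs_nonneg _) (Nat.cast_nonneg _)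
      _ ≤ 1 := mul_comm (cfError a (n + 1)) _ ▸ cfError_mul_cfDen_succ_le_one a (n + 1)
  one_le_mul_distNearestInt x hx := by
    have hx_one : (1 : ℝ) ≤ |(x : ℝ)| := by exact_mod_cast Int.one_le_abs hx
    have hdist : 0 ≤ distNearestInt (x * cfValue a) := abs_nonneg _
    obtain ⟨n, hlt, hle⟩ := exists_cfDen_lt_le_cfDen_succ a (by linarith : 1 < 2 * |(x : ℝ)|)
    have hlower : 1 ≤ 8 * gapExit A B (cfDen a n) * distNearestInt (x * cfValue a) :=
      calc 1 ≤ 2 * cfDen a (n + 1) * distNearestInt (x * cfValue a) :=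
            one_le_two_mul_cfDen_mul_distNearestInt a _ hx (by exact_mod_cast hle)
        _ ≤ 8 * gapExit A B (cfDen a n) * distNearestInt (x * cfValue a) :=
            mul_le_mul_of_nonneg_right (by linarith [(ha n).2]) hdist
    rcases gapExit_eq_self_or hAB hBA (Nat.cast_nonneg (cfDen a n)) with hself | ⟨i, hAi, hexit⟩
    · exact .inl (hlower.trans (mul_le_mul_of_nonneg_right (by linarith) hdist))
    · exact .inr ⟨i, hAi.trans hlt.le, hexit ▸ hlower⟩

lemma not_countable_setOf_hasApproximationGaps (hA : ∀ i, 1 < A i) :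
    ¬ {ζ | HasApproximationGaps A B ζ}.Countable := by
  have hexit_one : gapExit A B (1 : ℕ) ≤ 1 := by
    rcases gapExit_eq_self_or hAB hBA zero_le_one with hself | ⟨i, hAi, -⟩
    · exact_mod_cast hself.le
    · exact absurd hAi (hA i).not_ge
  refine fun hcount => not_countable_setOf_cfDen_growth (J := fun y => gapExit A B y)
    (fun y => le_gapExit A B y) hexit_one ((hcount.preimage cfValue_injective).mono fun a ha => ?_)
  exact hasApproximationGaps_cfValue hAB hBA hA ha

end Gaps

section Exponents

lemma sSup_coe_image_eq_of_Ioo_subset {S : Set ℝ} {w : ℝ} (hw : 0 < w) (hle : ∀ ν ∈ S, ν ≤ w)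
    (hIoo : ∀ ν, 0 < ν → ν < w → ν ∈ S) :
    sSup ((fun ν : ℝ => (ν : EReal)) '' S) = (w : EReal) := by
  have hsub : Set.Ioo 0 w ⊆ S := fun ν hν => hIoo ν hν.1 hν.2
  have hlub : IsLUB S w := (isLUB_Ioo hw).of_subset_of_superset isLUB_Iic hsub hle
  exact (hlub.isLUB_of_tendsto (EReal.coe_strictMono.monotone.monotoneOn _)
    ((Set.nonempty_Ioo.mpr hw).mono hsub)
    continuous_coe_real_ereal.continuousWithinAt).sSup_eq

lemma eventually_rpow_neg_lt_mul_rpow_neg {a b c : ℝ} (hab : a < b) (hc : 0 < c) :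
    ∀ᶠ X : ℝ in atTop, X ^ (-b) < (c * X) ^ (-a) := by
  have hpow : (0 : ℝ) < c ^ (-a) := Real.rpow_pos_of_pos hc _
  filter_upwards [(tendsto_rpow_neg_atTop (sub_pos.mpr hab)).eventually_lt_const hpow,
    eventually_gt_atTop 0] with X hX hX_pos
  calc X ^ (-b) = X ^ (-(b - a)) * X ^ (-a) := by rw [← Real.rpow_add hX_pos]; ring_nf
    _ < c ^ (-a) * X ^ (-a) := mul_lt_mul_of_pos_right hX (Real.rpow_pos_of_pos hX_pos _)
    _ = (c * X) ^ (-a) := (Real.mul_rpow hc.le hX_pos.le).symm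

/-- If `x` and `y` are exceptional approximations for the gaps `i` of `ξ` and `j` of `η`, then
either `j ≤ i`, and the approximation of `η` is bad, or `i < j`, and `y` is beyond the gap of `ξ`,
whose approximation is then bad. -/
lemma HasApproximationGaps.rpow_neg_le_max {A₀ B₀ A₁ B₁ : ℕ → ℝ} {ξ η w X : ℝ}
    (hξ : HasApproximationGaps A₀ B₀ ξ) (hη : HasApproximationGaps A₁ B₁ η) (hw : 1 ≤ w)
    (hA₀ : ∀ i, 0 ≤ A₀ i) (hB₁ : ∀ i j, j ≤ i → B₁ j ≤ A₀ i ^ w)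
    (hB₀ : ∀ i j, i < j → B₀ i ≤ A₁ j)
    {x y : ℤ} (hx : x ≠ 0) (hy : y ≠ 0) (hxX : |(x : ℝ)| ≤ X) (hyX : |(y : ℝ)| ≤ X) :
    (32 * X) ^ (-w) ≤ max (distNearestInt (x * ξ)) (distNearestInt (y * η)) := by
  have hX : 1 ≤ X := hxX.trans' (by exact_mod_cast Int.one_le_abs hx)
  set M := max (distNearestInt (x * ξ)) (distNearestInt (y * η))
  have hξM : distNearestInt (x * ξ) ≤ M := le_max_left _ _
  have hηM : distNearestInt (y * η) ≤ M := le_max_right _ _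
  have hξ_nonneg : 0 ≤ distNearestInt (x * ξ) := abs_nonneg _
  have hη_nonneg : 0 ≤ distNearestInt (y * η) := abs_nonneg _
  have hlinear : 16 * X ≤ (32 * X) ^ w :=
    (Real.self_le_rpow_of_one_le (by linarith) hw).trans' (by linarith)
  have hpower : 8 * (2 * X) ^ w ≤ (32 * X) ^ w :=
    calc 8 * (2 * X) ^ w ≤ 16 ^ w * (2 * X) ^ w :=
          mul_le_mul_of_nonneg_right
            ((Real.self_le_rpow_of_one_le (by norm_num) hw).trans' (by norm_num)) (by positivity)
      _ = (32 * X) ^ w := by rw [← Real.mul_rpow (by norm_num) (by linarith)]; ring_nf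
  suffices h : ∃ C d, C ≤ (32 * X) ^ w ∧ 0 ≤ d ∧ d ≤ M ∧ 1 ≤ C * d by
    obtain ⟨C, d, hC, hd, hdM, hCd⟩ := h
    rw [Real.rpow_neg (by linarith), inv_le_iff_one_le_mul₀' (by positivity)]
    exact hCd.trans (mul_le_mul hC hdM hd (by positivity))
  rcases hξ.one_le_mul_distNearestInt x hx with hbad | ⟨i, hi, hBi⟩
  · exact ⟨_, _, by linarith, hξ_nonneg, hξM, hbad⟩
  rcases hη.one_le_mul_distNearestInt y hy with hbad | ⟨j, hj, hBj⟩
  · exact ⟨_, _, by linarith, hη_nonneg, hηM, hbad⟩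
  rcases le_or_gt j i with hji | hij
  · have hBX : B₁ j ≤ (2 * X) ^ w :=
      (hB₁ i j hji).trans (Real.rpow_le_rpow (hA₀ i) (by linarith) (by linarith))
    exact ⟨_, _, by linarith, hη_nonneg, hηM, hBj⟩
  · exact ⟨_, _, by linarith [hB₀ i j hij], hξ_nonneg, hξM, hBi⟩

lemma HasApproximationGaps.mem_lambda1Set {A B : ℕ → ℝ} {ζ l μ : ℝ}
    (h : HasApproximationGaps A B ζ) (hA : Tendsto A atTop atTop) (hB : ∀ i, A i ^ l ≤ B i)
    (hμ : 0 ≤ μ) (hμl : μ < l) : μ ∈ lambda1Set ζ := by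
  intro N
  obtain ⟨i, hi, hNi, hi_pos⟩ := ((hA.eventually (eventually_rpow_neg_lt_mul_rpow_neg hμl
    (by norm_num : (0 : ℝ) < 4))).and ((hA.eventually_ge_atTop N).and
    (hA.eventually_gt_atTop 0))).exists
  obtain ⟨x, hAx, hxA, hx⟩ := h.exists_mul_distNearestInt_le_one i
  have hx_pos : (0 : ℝ) < x := hi_pos.trans_le hAx
  have hpow : 0 < A i ^ l := Real.rpow_pos_of_pos hi_pos l
  refine ⟨x, by exact_mod_cast hNi.trans hAx, by exact_mod_cast hx_pos, ?_⟩
  calc distNearestInt (x * ζ) ≤ A i ^ (-l) := by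
        rw [Real.rpow_neg hi_pos.le, ← one_div, le_div_iff₀' hpow]
        exact (mul_le_mul_of_nonneg_right (hB i) (abs_nonneg _)).trans hx
    _ ≤ (4 * A i) ^ (-μ) := hi.le
    _ ≤ x ^ (-μ) := Real.rpow_le_rpow_of_nonpos hx_pos hxA (neg_nonpos.mpr hμ)

lemma le_of_mem_lambda1Set {ζ c l μ : ℝ} (hc : 0 < c)
    (h : ∀ x : ℕ, x ≠ 0 → (c * x) ^ (-l) ≤ distNearestInt (x * ζ)) (hμ : μ ∈ lambda1Set ζ) :
    μ ≤ l := by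
  by_contra! hlμ
  obtain ⟨N, hN⟩ := eventually_atTop.mp (tendsto_natCast_atTop_atTop.eventually
    (eventually_rpow_neg_lt_mul_rpow_neg hlμ hc))
  obtain ⟨q, hNq, hq_pos, hq⟩ := hμ N
  exact (hN q hNq).not_ge ((h q hq_pos.ne').trans hq)

lemma mem_chiSet_of_hasApproximationGaps {k : ℕ} {ζ : Fin k → ℝ} {A B : Fin k → ℕ → ℝ} {T : ℕ → ℝ}
    {w ν : ℝ} (h : ∀ j, HasApproximationGaps (A j) (B j) (ζ j)) (hT : Tendsto T atTop atTop)
    (hA : ∀ j i, 0 < A j i) (hAT : ∀ j i, A j i ≤ T i) (hTB : ∀ j i, T i ^ w ≤ B j i)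
    (hνw : ν < w) : ν ∈ chiSet k ζ := by
  intro X₀
  obtain ⟨i, hi, hXi, hi_pos⟩ := ((hT.eventually (eventually_rpow_neg_lt_mul_rpow_neg hνw
    (by norm_num : (0 : ℝ) < 4))).and ((hT.eventually_ge_atTop X₀).and
    (hT.eventually_gt_atTop 0))).exists
  choose x hAx hxA hx using fun j => (h j).exists_mul_distNearestInt_le_one i
  have hpow : 0 < T i ^ w := Real.rpow_pos_of_pos hi_pos w
  refine ⟨4 * T i, by linarith, fun j => x j, fun j => ?_, fun j => ?_, fun j => ?_⟩
  · have hx_pos : (0 : ℝ) < x j := (hA j i).trans_le (hAx j)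
    exact Int.natCast_ne_zero.mpr (Nat.cast_pos.mp hx_pos).ne'
  · have hxT : (x j : ℝ) ≤ 4 * T i := (hxA j).trans (by linarith [hAT j i])
    simpa using hxT
  · refine hi.le.trans' ?_
    rw [Real.rpow_neg hi_pos.le, ← one_div, le_div_iff₀' hpow]
    exact (mul_le_mul_of_nonneg_right (hTB j i) (abs_nonneg _)).trans (mod_cast hx j)

lemma le_of_mem_chiSet {k : ℕ} {ζ : Fin k → ℝ} {c w ν : ℝ} (hc : 0 < c)
    (h : ∀ (X : ℝ) (x : Fin k → ℤ), (∀ j, x j ≠ 0) → (∀ j, |(x j : ℝ)| ≤ X) →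
      ∃ j, (c * X) ^ (-w) ≤ distNearestInt (x j * ζ j))
    (hν : ν ∈ chiSet k ζ) : ν ≤ w := by
  by_contra! hwν
  obtain ⟨X₀, hX₀⟩ := eventually_atTop.mp (eventually_rpow_neg_lt_mul_rpow_neg hwν hc)
  obtain ⟨X, hX, x, hx, hxX, hdist⟩ := hν X₀
  obtain ⟨j, hj⟩ := h X x hx (by exact_mod_cast hxX)
  exact (hX₀ X hX).not_ge (hj.trans (hdist j))

end Exponents

section LinearIndependence

variable {K V : Type*} [DivisionRing K] [Countable K] [AddCommGroup V] [Module K V] {v : V} {k : ℕ}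
  {G : Fin k → Set V}

lemma exists_mem_linearIndependent_finCons (hv : v ≠ 0) (hG : ∀ j, ¬ (G j).Countable) :
    ∃ ζ : Fin k → V, (∀ j, ζ j ∈ G j) ∧
      LinearIndependent K (Fin.cons v ζ : Fin (k + 1) → V) := by
  induction k with
  | zero =>
    refine ⟨Fin.elim0, fun j => j.elim0, ?_⟩
    exact linearIndependent_finCons.mpr ⟨linearIndependent_empty_type, by simpa using hv⟩
  | succ k ih =>
    obtain ⟨ζ, hζ, hind⟩ := ih (G := fun j => G j.castSucc) fun j => hG j.castSucc
    let S := Submodule.span K (Set.range (Fin.cons v ζ : Fin (k + 1) → V))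
    have hS : (S : Set V).Countable := inferInstanceAs (Countable S)
    obtain ⟨y, hy, hyS⟩ := Set.not_subset.mp fun hsub => hG (Fin.last k) (hS.mono hsub)
    refine ⟨Fin.snoc ζ y, Fin.lastCases (by simpa using hy) (by simpa using hζ), ?_⟩
    rw [Fin.cons_snoc_eq_snoc_cons]
    exact linearIndependent_finSnoc.mpr ⟨hind, hyS⟩

lemma not_countable_setOf_linearIndependent_finCons [NeZero k] (hv : v ≠ 0)
    (hG : ∀ j, ¬ (G j).Countable) :
    ¬ {ζ : Fin k → V | LinearIndependent K (Fin.cons v ζ : Fin (k + 1) → V) ∧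
        ∀ j, ζ j ∈ G j}.Countable := by
  intro hcount
  have hfirst := hcount.image fun ζ => ζ 0
  obtain ⟨ζ, hζ, hind⟩ := exists_mem_linearIndependent_finCons (K := K) hv
    fun j hdiff => hG j (hdiff.of_sdiff hfirst)
  exact (hζ 0).2 ⟨ζ, ⟨hind, fun j => (hζ j).1⟩, rfl⟩

end LinearIndependence

section Tower

/-- The scales `2 ^ K ^ i`, each the `K`-th power of the previous one: all gaps of the construction
have the form `(tower K i ^ α, tower K i ^ β)`. -/
noncomputable def tower (K : ℝ) (i : ℕ) : ℝ :=
  2 ^ (K ^ i)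

variable {K α β l : ℝ}

lemma one_lt_tower (hK : 0 < K) (i : ℕ) : 1 < tower K i :=
  Real.one_lt_rpow one_lt_two (pow_pos hK i)

lemma tower_succ (K : ℝ) (i : ℕ) : tower K (i + 1) = tower K i ^ K := by
  rw [tower, tower, pow_succ, Real.rpow_mul zero_le_two]

lemma monotone_tower (hK : 1 ≤ K) : Monotone (tower K) := fun _ _ hij =>
  Real.rpow_le_rpow_of_exponent_le one_le_two (pow_le_pow_right₀ hK hij)

lemma tendsto_tower_atTop (hK : 1 < K) : Tendsto (tower K) atTop atTop :=
  (tendsto_rpow_atTop_of_base_gt_one 2 one_lt_two).comp (tendsto_pow_atTop_atTop_of_one_lt hK)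

lemma tower_rpow_le_tower_rpow_of_lt (hK : 1 ≤ K) (hα : 0 ≤ α) (hβ : β ≤ K * α) {i j : ℕ}
    (hij : i < j) : tower K i ^ β ≤ tower K j ^ α := by
  have hone : ∀ l, 1 < tower K l := one_lt_tower (zero_lt_one.trans_le hK)
  calc tower K i ^ β ≤ tower K i ^ (K * α) := Real.rpow_le_rpow_of_exponent_le (hone i).le hβ
    _ = tower K (i + 1) ^ α := by rw [tower_succ, Real.rpow_mul (zero_le_one.trans (hone i).le)]
    _ ≤ tower K j ^ α :=
      Real.rpow_le_rpow (zero_le_one.trans (hone _).le) (monotone_tower hK hij) hα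

lemma not_countable_setOf_hasApproximationGaps_tower (hK : 1 ≤ K) (hα : 0 < α) (hl : 1 ≤ l)
    (hlK : l ≤ K) :
    ¬ {ζ | HasApproximationGaps (tower K · ^ α) (tower K · ^ (α * l)) ζ}.Countable :=
  have hone : ∀ i, 1 < tower K i := one_lt_tower (zero_lt_one.trans_le hK)
  have hβ : α * l ≤ K * α := mul_comm α l ▸ mul_le_mul_of_nonneg_right hlK hα.le
  not_countable_setOf_hasApproximationGaps
    (fun i => Real.rpow_le_rpow_of_exponent_le (hone i).le (le_mul_of_one_le_right hα.le hl))
    (fun i => tower_rpow_le_tower_rpow_of_lt hK hα.le hβ i.lt_succ_self)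
    (fun i => Real.one_lt_rpow (hone i) hα)

lemma lambda1Exp_eq_of_hasApproximationGaps (hK : 1 < K) (hα : 0 < α) (hl : 1 ≤ l) (hlK : l ≤ K)
    {ζ : ℝ} (h : HasApproximationGaps (tower K · ^ α) (tower K · ^ (α * l)) ζ) :
    lambda1Exp ζ = (l : EReal) := by
  have hnonneg : ∀ i, 0 ≤ tower K i := fun i =>
    zero_le_one.trans (one_lt_tower (zero_lt_one.trans hK) i).le
  have hpow : ∀ i, (tower K i ^ α) ^ l = tower K i ^ (α * l) := fun i =>
    (Real.rpow_mul (hnonneg i) α l).symm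
  have hl_pos : 0 < l := zero_lt_one.trans_le hl
  have hβ : α * l ≤ K * α := mul_comm α l ▸ mul_le_mul_of_nonneg_right hlK hα.le
  refine sSup_coe_image_eq_of_Ioo_subset hl_pos (fun μ hμ => ?_)
    (fun μ hμ hμl => h.mem_lambda1Set ((tendsto_rpow_atTop hα).comp (tendsto_tower_atTop hK))
      (fun i => (hpow i).le) hμ.le hμl)
  refine le_of_mem_lambda1Set (by norm_num : (0 : ℝ) < 32) (fun x hx => ?_) hμ
  have hx' : (x : ℤ) ≠ 0 := Int.natCast_ne_zero.mpr hx
  have habs : |((x : ℤ) : ℝ)| ≤ x := by simp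
  have hmax := h.rpow_neg_le_max h hl (fun i => Real.rpow_nonneg (hnonneg i) _)
    (fun i j hji => (Real.rpow_le_rpow (hnonneg j) (monotone_tower hK.le hji)
      (mul_pos hα hl_pos).le).trans_eq (hpow i).symm)
    (fun i j => tower_rpow_le_tower_rpow_of_lt hK.le hα.le hβ) hx' hx' habs habs
  simpa using hmax

lemma chiExp_eq_of_hasApproximationGaps {k : ℕ} {α β : Fin k → ℝ} {ζ : Fin k → ℝ} {w : ℝ}
    (hK : 1 < K) (hw : 1 ≤ w) (hα : ∀ j, 0 < α j) (hα_one : ∀ j, α j ≤ 1) (hwβ : ∀ j, w ≤ β j)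
    {j₀ j₁ : Fin k} (hαj₀ : α j₀ = 1) (hβj₁ : β j₁ = w) (hβα : β j₀ ≤ K * α j₁)
    (h : ∀ j, HasApproximationGaps (tower K · ^ α j) (tower K · ^ β j) (ζ j)) :
    chiExp k ζ = (w : EReal) := by
  have hone : ∀ i, 1 < tower K i := one_lt_tower (zero_lt_one.trans hK)
  have hpos : ∀ i, 0 < tower K i := fun i => zero_lt_one.trans (hone i)
  have hw_pos : 0 < w := zero_lt_one.trans_le hw
  refine sSup_coe_image_eq_of_Ioo_subset hw_pos (fun ν hν => ?_) (fun ν _ hνw =>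
    mem_chiSet_of_hasApproximationGaps h (tendsto_tower_atTop hK)
      (fun j i => Real.rpow_pos_of_pos (hpos i) _)
      (fun j i => Real.rpow_le_self_of_one_le (hone i).le (hα_one j))
      (fun j i => Real.rpow_le_rpow_of_exponent_le (hone i).le (hwβ j)) hνw)
  refine le_of_mem_chiSet (by norm_num : (0 : ℝ) < 32) (fun X x hx hxX => ?_) hν
  have hmax := (h j₀).rpow_neg_le_max (h j₁) hw (fun i => Real.rpow_nonneg (hpos i).le _)
    (fun i j hji => by
      simpa [hαj₀, hβj₁] using
        Real.rpow_le_rpow (hpos j).le (monotone_tower hK.le hji) hw_pos.le)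
    (fun i j => tower_rpow_le_tower_rpow_of_lt hK.le (hα j₁).le hβα)
    (hx j₀) (hx j₁) (hxX j₀) (hxX j₁)
  exact (le_max_iff.mp hmax).elim (⟨j₀, ·⟩) (⟨j₁, ·⟩)

/-- The bounds valid for all `j` give common approximations of quality `w` at the scales
`tower K i`; those on `j₀` and `j₁` exclude better ones already for these two coordinates. -/
lemma exists_gapExponents {ι : Type*} [Finite ι] {lam : ι → ℝ} {w : ℝ} (hw : 1 ≤ w)
    (hwlam : ∀ j, w ≤ lam j) {j₀ j₁ : ι} (hne : j₁ ≠ j₀) :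
    ∃ (K : ℝ) (α : ι → ℝ), 1 < K ∧ (∀ j, lam j ≤ K) ∧ (∀ j, 0 < α j) ∧ (∀ j, α j ≤ 1) ∧
      (∀ j, w ≤ α j * lam j) ∧ α j₀ = 1 ∧ α j₁ * lam j₁ = w ∧ α j₀ * lam j₀ ≤ K * α j₁ := by
  classical
  have hw_pos : 0 < w := zero_lt_one.trans_le hw
  have hlam : ∀ j, 1 ≤ lam j := fun j => hw.trans (hwlam j)
  have hlam_pos : ∀ j, 0 < lam j := fun j => zero_lt_one.trans_le (hlam j)
  have hmul : ∀ j, w / lam j * lam j = w := fun j => div_mul_cancel₀ w (hlam_pos j).ne'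
  obtain ⟨K, hK⟩ := Finite.exists_le fun j => lam j₀ * lam j + 1
  have hlamK : ∀ j, lam j + 1 ≤ K := fun j =>
    (hK j).trans' (by linarith [le_mul_of_one_le_left (hlam_pos j).le (hlam j₀)])
  refine ⟨K, Function.update (fun j => w / lam j) j₀ 1, by linarith [hlamK j₀, hlam j₀],
    fun j => by linarith [hlamK j], fun j => ?_, fun j => ?_, fun j => ?_, by simp,
    by simp [hne, hmul], ?_⟩
  · rcases eq_or_ne j j₀ with rfl | hj
    · simp
    · simpa [hj] using div_pos hw_pos (hlam_pos j)
  · rcases eq_or_ne j j₀ with rfl | hj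
    · simp
    · simpa [hj] using (div_le_one (hlam_pos j)).mpr (hwlam j)
  · rcases eq_or_ne j j₀ with rfl | hj
    · simpa using hwlam j
    · simp [hj, hmul]
  · simp only [Function.update_self, Function.update_of_ne hne, one_mul, ← mul_div_assoc]
    rw [le_div_iff₀ (hlam_pos j₁)]
    nlinarith [hK j₁, mul_pos (hlam_pos j₀) (hlam_pos j₁)]

end Tower

/-- For every integer `k ≥ 2` and all reals `λ₁,…,λ_k, w` with
`1 ≤ w ≤ min_j λ_j`, there exist uncountably many vectors `(ζ₁,…,ζ_k) ∈ ℝ^k`,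
ℚ-linearly independent together with `1`, such that `λ₁(ζ_j) = λ_j` for each `j` and
`χ_k(ζ₁,…,ζ_k) = w`. -/
theorem uncountably_many_prescribed_exponents (k : ℕ) (hk : 2 ≤ k)
    (lam : Fin k → ℝ) (w : ℝ) (hw1 : 1 ≤ w) (hwlam : ∀ j, w ≤ lam j) :
    ¬ Set.Countable {ζ : Fin k → ℝ |
        LinearIndependent ℚ (Fin.cons (1 : ℝ) ζ : Fin (k + 1) → ℝ) ∧
        (∀ j, lambda1Exp (ζ j) = (lam j : EReal)) ∧
        chiExp k ζ = (w : EReal)} := by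
  obtain ⟨m, rfl⟩ := Nat.exists_eq_add_of_le' hk
  obtain ⟨K, α, hK, hlamK, hα, hα_one, hw, hα₀, hα₁, hα₀₁⟩ :=
    exists_gapExponents hw1 hwlam (j₀ := 0) (j₁ := 1) one_ne_zero
  have hlam : ∀ j, 1 ≤ lam j := fun j => hw1.trans (hwlam j)
  refine mt (Set.Countable.mono ?_) (not_countable_setOf_linearIndependent_finCons
    (K := ℚ) (one_ne_zero (α := ℝ)) fun j =>
      not_countable_setOf_hasApproximationGaps_tower hK.le (hα j) (hlam j) (hlamK j))
  rintro ζ ⟨hind, hgaps⟩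
  have hlambda : ∀ j, lambda1Exp (ζ j) = lam j := fun j =>
    lambda1Exp_eq_of_hasApproximationGaps hK (hα j) (hlam j) (hlamK j) (hgaps j)
  have hchi : chiExp (m + 2) ζ = w :=
    chiExp_eq_of_hasApproximationGaps hK hw1 hα hα_one hw hα₀ hα₁ hα₀₁ hgaps
  exact ⟨hind, hlambda, hchi⟩
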